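/- If U is a universe with 1 ∈ Û, then 1 = {0|·} is U-invertible if and only if U contains no Left end that is a disintegrator. -/

import Mathlib

/-- Augmented (misère) game forms: finitely many Left and Right options,
    possibly adorned with a Left and/or Right tombstone marker. -/
inductive Aug : Type
  | mk (m n : ℕ) (L : Fin m → Aug) (R : Fin n → Aug) (tl tr : Bool) : Aug

namespace Aug

def numL : Aug → ℕ
  | mk m _ _ _ _ _ => m

def numR : Aug → ℕ
  | mk _ n _ _ _ _ => n

def moveL : (G : Aug) → Fin G.numL → Aug
  | mk _ _ L _ _ _ => L

def moveR : (G : Aug) → Fin G.numR → Aug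
  | mk _ _ _ R _ _ => R

def tombL : Aug → Bool
  | mk _ _ _ _ t _ => t

def tombR : Aug → Bool
  | mk _ _ _ _ _ t => t

instance : Zero Aug := ⟨mk 0 0 Fin.elim0 Fin.elim0 false false⟩

/-- Disjunctive sum of augmented forms (tombstones propagate to the sum). -/
protected noncomputable def add : Aug → Aug → Aug := by
  intro x
  induction x with
  | mk m n L R tl tr IHL IHR =>
    intro y
    induction y with
    | mk m' n' L' R' tl' tr' IHL' IHR' =>
      exact mk (m + m') (n + n')
        (Fin.addCases (motive := fun _ => Aug)
          (fun i => IHL i (mk m' n' L' R' tl' tr')) (fun j => IHL' j))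
        (Fin.addCases (motive := fun _ => Aug)
          (fun i => IHR i (mk m' n' L' R' tl' tr')) (fun j => IHR' j))
        (tl || tl') (tr || tr')

noncomputable instance : Add Aug := ⟨Aug.add⟩

/-- Conjugate: swap Left and Right throughout. -/
noncomputable def conj : Aug → Aug := by
  intro G
  induction G with
  | mk m n L R tl tr IHL IHR => exact mk n m IHR IHL tr tl

/-- A genuine game form: no tombstones anywhere. -/
def IsGame : Aug → Prop := by
  intro G
  induction G with
  | mk m n L R tl tr IHL IHR =>
    exact tl = false ∧ tr = false ∧ (∀ i, IHL i) ∧ (∀ j, IHR j)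

/-- Formal birthday (tombstones contribute nothing). -/
noncomputable def birthday : Aug → ℕ := by
  intro G
  induction G with
  | mk m n L R _ _ IHL IHR =>
    exact max (Finset.univ.sup fun i => IHL i + 1) (Finset.univ.sup fun j => IHR j + 1)

/-- `winsF G true` : Left, moving first, wins `G` in misère play
    (a Left end-like position is a first-player win for Left).
    `winsF G false` : Right, moving first, wins `G`. -/
def winsF : Aug → Bool → Prop := by
  intro G
  induction G with
  | mk m n L R tl tr IHL IHR =>
    intro b
    exact match b with
      | true => tl = true ∨ m = 0 ∨ ∃ i, ¬ IHL i false
      | false => tr = true ∨ n = 0 ∨ ∃ j, ¬ IHR j true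

/-- Left outcome is `L`. -/
def oL (G : Aug) : Prop := winsF G true

/-- Right outcome is `L` (Left, moving second, wins). -/
def oR (G : Aug) : Prop := ¬ winsF G false

/-- `outcome G ≥ outcome H` in the misère partial order of outcomes
    (Left prefers larger). -/
def outGe (G H : Aug) : Prop := (oL H → oL G) ∧ (oR H → oR G)

/-- `outcome G = outcome H`. -/
def outEq (G H : Aug) : Prop := (oL G ↔ oL H) ∧ (oR G ↔ oR H)

/-- `G ≥_A H`. -/
def geA (A : Set Aug) (G H : Aug) : Prop := ∀ X ∈ A, outGe (G + X) (H + X)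

/-- `G ≡_A H`. -/
def equivA (A : Set Aug) (G H : Aug) : Prop := ∀ X ∈ A, outEq (G + X) (H + X)

def LeftEnd (G : Aug) : Prop := G.numL = 0
def RightEnd (G : Aug) : Prop := G.numR = 0
def LeftEndLike (G : Aug) : Prop := G.tombL = true ∨ G.numL = 0
def RightEndLike (G : Aug) : Prop := G.tombR = true ∨ G.numR = 0

/-- `G` is Left `A`-strong. -/
def LeftStrong (A : Set Aug) (G : Aug) : Prop :=
  ∀ X ∈ A, LeftEnd X → winsF (G + X) true

/-- `G` is Right `A`-strong. -/
def RightStrong (A : Set Aug) (G : Aug) : Prop :=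
  ∀ X ∈ A, RightEnd X → winsF (G + X) false

/-- Hereditarily closed set of games. -/
def Hereditary (A : Set Aug) : Prop :=
  ∀ G ∈ A, (∀ i, G.moveL i ∈ A) ∧ (∀ j, G.moveR j ∈ A)

/-- An (absolute) universe of misère games. -/
structure IsUniverse (U : Set Aug) : Prop where
  games : ∀ G ∈ U, IsGame G
  zero_mem : (0 : Aug) ∈ U
  add_mem : ∀ G ∈ U, ∀ H ∈ U, G + H ∈ U
  conj_mem : ∀ G ∈ U, conj G ∈ U
  moveL_mem : ∀ G ∈ U, ∀ i, G.moveL i ∈ U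
  moveR_mem : ∀ G ∈ U, ∀ j, G.moveR j ∈ U
  dicotic : ∀ (m n : ℕ) (L : Fin m → Aug) (R : Fin n → Aug), 0 < m → 0 < n →
    (∀ i, L i ∈ U) → (∀ j, R j ∈ U) → mk m n L R false false ∈ U

/-- `Û`: the augmented forms admitting a `U`-expansion, i.e. equivalent
    modulo `U` to some member of `U`. -/
def hatU (U : Set Aug) : Set Aug := {G | ∃ G' ∈ U, equivA U G G'}

/-- `G` is `A`-invertible (with inverse in `A`). -/
def Invertible (A : Set Aug) (G : Aug) : Prop := ∃ H ∈ A, equivA A (G + H) 0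

/-- `G` is `U`-invertible with inverse in `Û`. -/
def InvertibleHat (U : Set Aug) (G : Aug) : Prop := ∃ H ∈ hatU U, equivA U (G + H) 0

/-- `G` is conjugate `A`-invertible. -/
def ConjInvertible (A : Set Aug) (G : Aug) : Prop :=
  conj G ∈ A ∧ equivA A (G + conj G) 0

/-- `A` is a monoid of games: a set of games containing `0`, closed under
    disjunctive sum, on which `≡_A` is a congruence. -/
structure IsMonoidOfGames (A : Set Aug) : Prop where
  games : ∀ G ∈ A, IsGame G
  zero_mem : (0 : Aug) ∈ A
  add_mem : ∀ G ∈ A, ∀ H ∈ A, G + H ∈ A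
  congr : ∀ G ∈ A, ∀ H ∈ A, ∀ J ∈ A, equivA A G H → equivA A (G + J) (H + J)

/-- `U`-simplest form: hereditarily, no dominated options, no reversible
    options, and no unnecessary tombstones. -/
def Simplest (U : Set Aug) : Aug → Prop := by
  intro G
  induction G with
  | mk m n L R tl tr IHL IHR =>
    exact
      (∀ i i' : Fin m, geA U (L i) (L i') → i = i') ∧
      (∀ j j' : Fin n, geA U (R j) (R j') → j = j') ∧
      (∀ i : Fin m, ∀ jj : Fin (L i).numR, ¬ geA U (mk m n L R tl tr) ((L i).moveR jj)) ∧
      (∀ j : Fin n, ∀ ii : Fin (R j).numL, ¬ geA U ((R j).moveL ii) (mk m n L R tl tr)) ∧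
      (tl = true → ¬ equivA U (mk m n L R tl tr) (mk m n L R false tr)) ∧
      (tr = true → ¬ equivA U (mk m n L R tl tr) (mk m n L R tl false)) ∧
      (∀ i, IHL i) ∧ (∀ j, IHR j)

lemma birthday_mk (m n : ℕ) (L : Fin m → Aug) (R : Fin n → Aug) (tl tr : Bool) :
    birthday (mk m n L R tl tr) =
      max (Finset.univ.sup fun i => birthday (L i) + 1)
          (Finset.univ.sup fun j => birthday (R j) + 1) := rfl

lemma birthday_moveL_lt : ∀ (G : Aug) (i : Fin G.numL), birthday (G.moveL i) < birthday G := by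
  intro G
  cases G with
  | mk m n L R tl tr =>
    intro i
    show birthday (L i) < birthday (mk m n L R tl tr)
    rw [birthday_mk]
    have h1 : birthday (L i) + 1 ≤ Finset.univ.sup (fun i => birthday (L i) + 1) :=
      Finset.le_sup (f := fun i => birthday (L i) + 1) (Finset.mem_univ i)
    exact lt_of_lt_of_le (Nat.lt_succ_self _) (h1.trans (le_max_left _ _))

lemma birthday_moveR_lt : ∀ (G : Aug) (j : Fin G.numR), birthday (G.moveR j) < birthday G := by
  intro G
  cases G with
  | mk m n L R tl tr =>
    intro j
    show birthday (R j) < birthday (mk m n L R tl tr)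
    rw [birthday_mk]
    have h1 : birthday (R j) + 1 ≤ Finset.univ.sup (fun j => birthday (R j) + 1) :=
      Finset.le_sup (f := fun j => birthday (R j) + 1) (Finset.mem_univ j)
    exact lt_of_lt_of_le (Nat.lt_succ_self _) (h1.trans (le_max_right _ _))

/-- A disintegrator. -/
def Disintegrator (G : Aug) : Prop :=
  ∃ j : Fin G.numR, (G.moveR j).numL ≠ 0 ∧
    ∀ i : Fin (G.moveR j).numL,
      ¬ winsF ((G.moveR j).moveL i) true ∨ Disintegrator ((G.moveR j).moveL i)
termination_by birthday G
decreasing_by exact lt_trans (birthday_moveL_lt _ _) (birthday_moveR_lt _ _)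

/-- A starkiller. -/
def Starkiller (G : Aug) : Prop :=
  ∃ j : Fin G.numR, winsF (G.moveR j) false ∧
    ∀ i : Fin (G.moveR j).numL,
      ¬ winsF ((G.moveR j).moveL i) true ∨ Starkiller ((G.moveR j).moveL i)
termination_by birthday G
decreasing_by exact lt_trans (birthday_moveL_lt _ _) (birthday_moveR_lt _ _)

def one : Aug := mk 1 0 (fun _ => 0) Fin.elim0 false false
def two : Aug := mk 1 0 (fun _ => one) Fin.elim0 false false
def star : Aug := mk 1 1 (fun _ => 0) (fun _ => 0) false false
/-- `conjugate(1) = {·|0}`. -/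
def oneConj : Aug := mk 0 1 Fin.elim0 (fun _ => 0) false false
/-- `{·|2}`. -/
def endTwo : Aug := mk 0 1 Fin.elim0 (fun _ => two) false false

/-- `n` copies of `G` summed. -/
noncomputable def nCopies : ℕ → Aug → Aug
  | 0, _ => 0
  | n + 1, G => nCopies n G + G

/-- Dicot: every subposition has both or neither kind of option. -/
def Dicot : Aug → Prop := by
  intro G
  induction G with
  | mk m n L R _ _ IHL IHR => exact (m = 0 ↔ n = 0) ∧ (∀ i, IHL i) ∧ (∀ j, IHR j)

/-- Hereditarily a Left end. -/
def LeftEndHered : Aug → Prop := by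
  intro G
  induction G with
  | mk m n L R _ _ IHL IHR => exact m = 0 ∧ (∀ j, IHR j)

/-- Hereditarily a Right end. -/
def RightEndHered : Aug → Prop := by
  intro G
  induction G with
  | mk m n L R _ _ IHL IHR => exact n = 0 ∧ (∀ i, IHL i)

/-- Dead-ending: once a player has no move in a subposition, that player
    never again has a move. -/
def DeadEnding : Aug → Prop := by
  intro G
  induction G with
  | mk m n L R tl tr IHL IHR =>
    exact (m = 0 → LeftEndHered (mk m n L R tl tr)) ∧
      (n = 0 → RightEndHered (mk m n L R tl tr)) ∧
      (∀ i, IHL i) ∧ (∀ j, IHR j)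

/-- Left weak set of games. -/
def LeftWeak (A : Set Aug) : Prop := ∀ G : Aug, LeftStrong A G ↔ LeftEndLike G

/-- Right weak set of games. -/
def RightWeak (A : Set Aug) : Prop := ∀ G : Aug, RightStrong A G ↔ RightEndLike G

end Aug

/-!
Comparisons come from one criterion, `geA_of_maintenance`: `G ≥ H` as soon as Left, playing `G + X`,
can imitate a winning strategy on `H + X`.

If no Left end of `U` is a disintegrator, Left answers every Left end `X` on `1 + conj 1 + X` by
moving to `conj 1 + X`, so `1 + conj 1` is Left `U`-strong; the criterion gives `1 + conj 1 ≥ 0`,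
and conjugating gives the reverse inequality.

Conversely, let `X ∈ U` be a Left end with a disintegrating Right option `Q`. By recursion through
the Left options of `Q` one builds a `Y ∈ U` that Left loses moving first and that satisfies
`Y + 1 ≥ X + 1` in every context. If `1 + H` were equivalent to `0`, then `Y`, equivalent to
`Y + 1 + H`, would be at least as good for Left as `X + 1 + H`, which is equivalent to `X`; but
Left, moving first, wins the Left end `X`.
-/

namespace Aug

section Options

variable {G H K : Aug}

/-- The Left options of `G` as a set, forgetting the order and multiplicity in which `moveL` lists
them, so that options can be compared without reference to indices. -/
def leftOptions (G : Aug) : Set Aug := Set.range G.moveL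

/-- The Right options of `G` as a set; the counterpart of `leftOptions`. -/
def rightOptions (G : Aug) : Set Aug := Set.range G.moveR

lemma options_induction {P : Aug → Prop}
    (step : ∀ G, (∀ K ∈ G.leftOptions, P K) → (∀ K ∈ G.rightOptions, P K) → P G) (G : Aug) :
    P G := by
  induction G with
  | mk m n L R tl tr ihL ihR =>
    exact step _ (Set.forall_mem_range.2 ihL) (Set.forall_mem_range.2 ihR)

lemma rightLeft_induction {P : Aug → Prop}
    (step : ∀ G, (∀ Q ∈ G.rightOptions, ∀ K ∈ Q.leftOptions, P K) → P G) (G : Aug) : P G := by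
  suffices h : P G ∧ ∀ K ∈ G.leftOptions, P K from h.1
  induction G using options_induction with
  | step G ihL ihR => exact ⟨step G fun Q hQ => (ihR Q hQ).2, fun K hK => (ihL K hK).1⟩

lemma finite_leftOptions (G : Aug) : G.leftOptions.Finite := Set.finite_range _

lemma not_leftEnd_iff : ¬ LeftEnd G ↔ G.leftOptions.Nonempty := by
  rw [leftOptions, Set.range_nonempty_iff_nonempty, ← Fin.pos_iff_nonempty, Nat.pos_iff_ne_zero,
    LeftEnd]

lemma not_rightEnd_iff : ¬ RightEnd G ↔ G.rightOptions.Nonempty := by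
  rw [rightOptions, Set.range_nonempty_iff_nonempty, ← Fin.pos_iff_nonempty, Nat.pos_iff_ne_zero,
    RightEnd]

lemma leftEnd_iff : LeftEnd G ↔ G.leftOptions = ∅ := by
  rw [← Set.not_nonempty_iff_eq_empty, ← not_leftEnd_iff, not_not]

lemma rightEnd_iff : RightEnd G ↔ G.rightOptions = ∅ := by
  rw [← Set.not_nonempty_iff_eq_empty, ← not_rightEnd_iff, not_not]

lemma IsGame.tombL_eq (h : IsGame G) : G.tombL = false := by
  cases G
  exact h.1

lemma IsGame.tombR_eq (h : IsGame G) : G.tombR = false := by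
  cases G
  exact h.2.1

lemma IsGame.of_mem_leftOptions (h : IsGame G) (hK : K ∈ G.leftOptions) : IsGame K := by
  cases G
  obtain ⟨i, rfl⟩ := hK
  exact h.2.2.1 i

lemma IsGame.of_mem_rightOptions (h : IsGame G) (hK : K ∈ G.rightOptions) : IsGame K := by
  cases G
  obtain ⟨j, rfl⟩ := hK
  exact h.2.2.2 j

lemma Hereditary.mem_of_mem_leftOptions {A : Set Aug} (hA : Hereditary A) (hG : G ∈ A)
    (hK : K ∈ G.leftOptions) : K ∈ A := by
  obtain ⟨i, rfl⟩ := hK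
  exact (hA G hG).1 i

lemma Hereditary.mem_of_mem_rightOptions {A : Set Aug} (hA : Hereditary A) (hG : G ∈ A)
    (hK : K ∈ G.rightOptions) : K ∈ A := by
  obtain ⟨j, rfl⟩ := hK
  exact (hA G hG).2 j

lemma hereditary_univ : Hereditary Set.univ :=
  fun _ _ => ⟨fun _ => trivial, fun _ => trivial⟩

@[simp] lemma leftOptions_zero : (0 : Aug).leftOptions = ∅ := leftEnd_iff.1 rfl

@[simp] lemma leftOptions_one : one.leftOptions = {0} :=
  Set.range_const (ι := Fin 1)

lemma tombL_one : one.tombL = false := rfl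

lemma tombR_one : one.tombR = false := rfl

@[simp] lemma rightOptions_one : one.rightOptions = ∅ := rightEnd_iff.1 rfl

@[simp] lemma leftOptions_oneConj : oneConj.leftOptions = ∅ := leftEnd_iff.1 rfl

@[simp] lemma rightOptions_oneConj : oneConj.rightOptions = {0} :=
  Set.range_const (ι := Fin 1)

end Options

section Sum

lemma mk_add_mk (m n : ℕ) (L : Fin m → Aug) (R : Fin n → Aug) (tl tr : Bool)
    (m' n' : ℕ) (L' : Fin m' → Aug) (R' : Fin n' → Aug) (tl' tr' : Bool) :
    mk m n L R tl tr + mk m' n' L' R' tl' tr' =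
      mk (m + m') (n + n')
        (Fin.append (fun i => L i + mk m' n' L' R' tl' tr') fun i => mk m n L R tl tr + L' i)
        (Fin.append (fun j => R j + mk m' n' L' R' tl' tr') fun j => mk m n L R tl tr + R' j)
        (tl || tl') (tr || tr') := rfl

lemma mk_eq_mk {m n m' n' : ℕ} {L : Fin m → Aug} {R : Fin n → Aug} {L' : Fin m' → Aug}
    {R' : Fin n' → Aug} {tl tr tl' tr' : Bool} (hm : m = m') (hn : n = n')
    (hL : L = L' ∘ Fin.cast hm) (hR : R = R' ∘ Fin.cast hn) (htl : tl = tl') (htr : tr = tr') :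
    mk m n L R tl tr = mk m' n' L' R' tl' tr' := by
  subst hm hn htl htr hL hR
  rfl

lemma zero_eq_mk : (0 : Aug) = mk 0 0 Fin.elim0 Fin.elim0 false false := rfl

protected lemma zero_add (G : Aug) : 0 + G = G := by
  induction G with
  | mk m n L R tl tr ihL ihR =>
    rw [zero_eq_mk, mk_add_mk, ← zero_eq_mk]
    simp only [ihL, ihR]
    exact mk_eq_mk (Nat.zero_add m) (Nat.zero_add n) (Fin.append_left_nil _ _ rfl)
      (Fin.append_left_nil _ _ rfl) (Bool.false_or tl) (Bool.false_or tr)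

protected lemma add_zero (G : Aug) : G + 0 = G := by
  induction G with
  | mk m n L R tl tr ihL ihR =>
    rw [zero_eq_mk, mk_add_mk, ← zero_eq_mk]
    simp only [ihL, ihR]
    exact mk_eq_mk (Nat.add_zero m) (Nat.add_zero n) (Fin.append_right_nil _ _ rfl)
      (Fin.append_right_nil _ _ rfl) (Bool.or_false tl) (Bool.or_false tr)

lemma range_append {α : Type*} {m n : ℕ} (a : Fin m → α) (b : Fin n → α) :
    Set.range (Fin.append a b) = Set.range a ∪ Set.range b := by
  rw [← Set.Sum.elim_range, ← Fin.append_comp_sumElim]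
  exact (EquivLike.range_comp (Fin.append a b) finSumFinEquiv).symm

lemma map_append {α β : Type*} (f : α → β) {m n : ℕ} (a : Fin m → α) (b : Fin n → α) :
    (fun i => f (Fin.append a b i)) = Fin.append (fun i => f (a i)) fun i => f (b i) := by
  funext i
  induction i using Fin.addCases <;> simp only [Fin.append_left, Fin.append_right]

lemma append_add {m n : ℕ} (a : Fin m → Aug) (b : Fin n → Aug) (G : Aug) :
    (fun i => Fin.append a b i + G) = Fin.append (fun i => a i + G) fun i => b i + G :=
  map_append (· + G) a b

lemma add_append {m n : ℕ} (a : Fin m → Aug) (b : Fin n → Aug) (G : Aug) :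
    (fun i => G + Fin.append a b i) = Fin.append (fun i => G + a i) fun i => G + b i :=
  map_append (G + ·) a b

protected lemma add_assoc (G H K : Aug) : G + H + K = G + (H + K) := by
  induction G generalizing H K with
  | mk m n L R tl tr ihL ihR =>
    induction H generalizing K with
    | mk m' n' L' R' tl' tr' ihL' ihR' =>
      induction K with
      | mk m'' n'' L'' R'' tl'' tr'' ihL'' ihR'' =>
        simp only [mk_add_mk] at ihL'' ihR'' ⊢
        refine mk_eq_mk (Nat.add_assoc ..) (Nat.add_assoc ..) ?_ ?_ (Bool.or_assoc ..)
          (Bool.or_assoc ..)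
        · simp only [append_add, add_append, ihL, ihL', ihL'', mk_add_mk, Fin.append_assoc]
        · simp only [append_add, add_append, ihR, ihR', ihR'', mk_add_mk, Fin.append_assoc]

noncomputable instance : AddMonoid Aug where
  zero_add := Aug.zero_add
  add_zero := Aug.add_zero
  add_assoc := Aug.add_assoc
  nsmul := nsmulRec

variable (G H : Aug)

lemma tombL_add : (G + H).tombL = (G.tombL || H.tombL) := by
  cases G
  cases H
  rfl

lemma tombR_add : (G + H).tombR = (G.tombR || H.tombR) := by
  cases G
  cases H
  rfl

lemma leftOptions_add :
    (G + H).leftOptions = (· + H) '' G.leftOptions ∪ (G + ·) '' H.leftOptions := by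
  cases G
  cases H
  simp only [leftOptions, ← Set.range_comp]
  exact range_append _ _

lemma rightOptions_add :
    (G + H).rightOptions = (· + H) '' G.rightOptions ∪ (G + ·) '' H.rightOptions := by
  cases G
  cases H
  simp only [rightOptions, ← Set.range_comp]
  exact range_append _ _

end Sum

section Outcome

lemma oL_iff (G : Aug) :
    oL G ↔ G.tombL = true ∨ LeftEnd G ∨ ∃ K ∈ G.leftOptions, oR K := by
  rw [leftOptions, Set.exists_range_iff]
  cases G
  exact Iff.rfl

lemma oR_iff (G : Aug) :
    oR G ↔ G.tombR = false ∧ ¬ RightEnd G ∧ ∀ K ∈ G.rightOptions, oL K := by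
  have winsF_iff : winsF G false ↔ G.tombR = true ∨ RightEnd G ∨ ∃ j, ¬ oL (G.moveR j) := by
    cases G
    exact Iff.rfl
  rw [rightOptions, Set.forall_mem_range, oR, winsF_iff]
  simp only [not_or, Bool.not_eq_true, not_exists, not_not]

lemma LeftEnd.oL {G : Aug} (hG : LeftEnd G) : oL G := (oL_iff G).2 (Or.inr (Or.inl hG))

lemma nonempty_leftOptions_of_not_oL {G : Aug} (hG : ¬ oL G) : G.leftOptions.Nonempty :=
  not_leftEnd_iff.1 fun h => hG h.oL

lemma leftEnd_add_iff {G H : Aug} : LeftEnd (G + H) ↔ LeftEnd G ∧ LeftEnd H := by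
  simp only [leftEnd_iff, leftOptions_add, Set.union_empty_iff, Set.image_eq_empty]

lemma rightEnd_add_iff {G H : Aug} : RightEnd (G + H) ↔ RightEnd G ∧ RightEnd H := by
  simp only [rightEnd_iff, rightOptions_add, Set.union_empty_iff, Set.image_eq_empty]

lemma oL_add_iff (G H : Aug) :
    oL (G + H) ↔ G.tombL = true ∨ H.tombL = true ∨ (LeftEnd G ∧ LeftEnd H) ∨
      (∃ K ∈ G.leftOptions, oR (K + H)) ∨ ∃ K ∈ H.leftOptions, oR (G + K) := by
  simp only [oL_iff (G + H), tombL_add, leftEnd_add_iff, leftOptions_add, Set.mem_union,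
    or_and_right, exists_or, Set.exists_mem_image, Bool.or_eq_true, or_assoc]

lemma oR_add_iff (G H : Aug) :
    oR (G + H) ↔ G.tombR = false ∧ H.tombR = false ∧ ¬ (RightEnd G ∧ RightEnd H) ∧
      (∀ K ∈ G.rightOptions, oL (K + H)) ∧ ∀ K ∈ H.rightOptions, oL (G + K) := by
  simp only [oR_iff (G + H), tombR_add, rightEnd_add_iff, rightOptions_add, Set.mem_union,
    or_imp, forall_and, Set.forall_mem_image, Bool.or_eq_false_iff, and_assoc]

lemma oL_add_of_oR_left {G H K : Aug} (hK : K ∈ G.leftOptions) (h : oR (K + H)) :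
    oL (G + H) :=
  (oL_add_iff G H).2 (Or.inr (Or.inr (Or.inr (Or.inl ⟨K, hK, h⟩))))

lemma oL_add_of_oR_right {G H K : Aug} (hK : K ∈ H.leftOptions) (h : oR (G + K)) :
    oL (G + H) :=
  (oL_add_iff G H).2 (Or.inr (Or.inr (Or.inr (Or.inr ⟨K, hK, h⟩))))

lemma outEq_add_comm (G H : Aug) : outEq (G + H) (H + G) := by
  induction G using options_induction generalizing H with
  | step G ihGL ihGR =>
    induction H using options_induction with
    | step H ihHL ihHR =>
      constructor
      · rw [oL_add_iff, oL_add_iff H,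
          exists_congr fun K => and_congr_right fun hK => (ihGL K hK H).2,
          exists_congr fun K => and_congr_right fun hK => (ihHL K hK).2]
        grind
      · rw [oR_add_iff, oR_add_iff H, forall₂_congr fun K hK => (ihGR K hK H).1,
          forall₂_congr fun K hK => (ihHR K hK).1]
        tauto

end Outcome

section Order

variable {A : Set Aug} {G H K : Aug}

lemma geA_refl (A : Set Aug) (G : Aug) : geA A G G := fun _ _ => ⟨id, id⟩

lemma geA_trans (hGH : geA A G H) (hHK : geA A H K) : geA A G K := fun X hX =>
  ⟨fun h => (hGH X hX).1 ((hHK X hX).1 h), fun h => (hGH X hX).2 ((hHK X hX).2 h)⟩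

lemma equivA_iff : equivA A G H ↔ geA A G H ∧ geA A H G :=
  ⟨fun h => ⟨fun X hX => ⟨(h X hX).1.2, (h X hX).2.2⟩, fun X hX => ⟨(h X hX).1.1, (h X hX).2.1⟩⟩,
    fun h X hX => ⟨⟨(h.2 X hX).1, (h.1 X hX).1⟩, ⟨(h.2 X hX).2, (h.1 X hX).2⟩⟩⟩

lemma geA_univ_add_right (h : geA Set.univ G H) (K : Aug) : geA Set.univ (G + K) (H + K) := by
  intro X _
  rw [add_assoc, add_assoc]
  exact h (K + X) trivial

theorem geA_of_maintenance (hA : Hereditary A) (hG : G.tombR = false) (hH : H.tombL = false)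
    (hLeftEnd : LeftEnd H → LeftStrong A G) (hRightEnd : RightEnd G → RightStrong A H)
    (hLeft : ∀ K ∈ H.leftOptions,
      (∃ G' ∈ G.leftOptions, geA A G' K) ∨ ∃ K' ∈ K.rightOptions, geA A G K')
    (hRight : ∀ K ∈ G.rightOptions,
      (∃ H' ∈ H.rightOptions, geA A K H') ∨ ∃ K' ∈ K.leftOptions, geA A K' H) :
    geA A G H := by
  intro X hX
  induction X using options_induction with
  | step X ihL ihR =>
    constructor
    · intro h
      rcases (oL_add_iff H X).1 h with h | h | ⟨hHend, hXend⟩ | ⟨K, hK, h⟩ | ⟨X', hX', h⟩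
      · simp [hH] at h
      · exact (oL_add_iff G X).2 (Or.inr (Or.inl h))
      · exact hLeftEnd hHend X hX hXend
      · rcases hLeft K hK with ⟨G', hG', hge⟩ | ⟨K', hK', hge⟩
        · exact oL_add_of_oR_left hG' ((hge X hX).2 h)
        · exact (hge X hX).1 (((oR_add_iff K X).1 h).2.2.2.1 K' hK')
      · exact oL_add_of_oR_right hX' ((ihL X' hX' (hA.mem_of_mem_leftOptions hX hX')).2 h)
    · intro h
      obtain ⟨-, hXtomb, -, hHmove, hXmove⟩ := (oR_add_iff H X).1 h
      refine (oR_add_iff G X).2 ⟨hG, hXtomb, ?_, fun K hK => ?_, fun X' hX' => ?_⟩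
      · exact fun ⟨hGend, hXend⟩ => h (hRightEnd hGend X hX hXend)
      · rcases hRight K hK with ⟨H', hH', hge⟩ | ⟨K', hK', hge⟩
        · exact (hge X hX).1 (hHmove H' hH')
        · exact oL_add_of_oR_left hK' ((hge X hX).2 h)
      · exact (ihR X' hX' (hA.mem_of_mem_rightOptions hX hX')).1 (hXmove X' hX')

lemma geA_of_subset_leftOptions (hA : Hereditary A) (hG : G.tombR = false) (hH : H.tombL = false)
    (hGR : G.rightOptions.Nonempty) (hHL : H.leftOptions.Nonempty)
    (hsub : H.leftOptions ⊆ G.leftOptions) (hrev : ∀ K ∈ G.rightOptions, H ∈ K.leftOptions) :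
    geA A G H :=
  geA_of_maintenance hA hG hH (fun h => absurd h (not_leftEnd_iff.2 hHL))
    (fun h => absurd h (not_rightEnd_iff.2 hGR))
    (fun K hK => Or.inl ⟨K, hsub hK, geA_refl A K⟩)
    (fun K hK => Or.inr ⟨H, hrev K hK, geA_refl A H⟩)

end Order

section Conj

lemma conj_mk (m n : ℕ) (L : Fin m → Aug) (R : Fin n → Aug) (tl tr : Bool) :
    conj (mk m n L R tl tr) = mk n m (fun j => conj (R j)) (fun i => conj (L i)) tr tl := rfl

lemma conj_conj (G : Aug) : conj (conj G) = G := by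
  induction G with
  | mk m n L R tl tr ihL ihR => simp only [conj_mk, ihL, ihR]

lemma conj_add (G H : Aug) : conj (G + H) = conj G + conj H := by
  induction G generalizing H with
  | mk m n L R tl tr ihL ihR =>
    induction H with
    | mk m' n' L' R' tl' tr' ihL' ihR' =>
      simp only [conj_mk] at ihL' ihR'
      simp only [mk_add_mk, conj_mk, map_append conj, ihL, ihR, ihL', ihR']

lemma winsF_conj (G : Aug) (b : Bool) : winsF (conj G) b ↔ winsF G (!b) := by
  induction G generalizing b with
  | mk m n L R tl tr ihL ihR =>
    cases b
    · exact or_congr_right (or_congr_right (exists_congr fun i => not_congr (ihL i true)))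
    · exact or_congr_right (or_congr_right (exists_congr fun j => not_congr (ihR j false)))

lemma outGe_conj_iff {G H : Aug} : outGe (conj G) (conj H) ↔ outGe H G := by
  simp only [outGe, oL, oR, winsF_conj, Bool.not_true, Bool.not_false, not_imp_not]
  exact and_comm

lemma conj_zero : conj 0 = 0 :=
  mk_eq_mk rfl rfl (Subsingleton.elim _ _) (Subsingleton.elim _ _) rfl rfl

lemma conj_one : conj one = oneConj :=
  mk_eq_mk rfl rfl (Subsingleton.elim _ _) (funext fun _ => conj_zero) rfl rfl

lemma conj_oneConj : conj oneConj = one := by rw [← conj_one, conj_conj]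

variable {U : Set Aug} {G H : Aug}

lemma geA_conj (hU : ∀ X ∈ U, conj X ∈ U) (h : geA U G H) : geA U (conj H) (conj G) := by
  intro X hX
  rw [← conj_conj X, ← conj_add, ← conj_add]
  exact outGe_conj_iff.2 (h (conj X) (hU X hX))

lemma equivA_conj (hU : ∀ X ∈ U, conj X ∈ U) (h : equivA U G H) : equivA U (conj G) (conj H) :=
  have ⟨hGH, hHG⟩ := equivA_iff.1 h
  equivA_iff.2 ⟨geA_conj hU hHG, geA_conj hU hGH⟩

lemma conj_mem_hatU (hU : ∀ X ∈ U, conj X ∈ U) (h : G ∈ hatU U) : conj G ∈ hatU U :=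
  have ⟨G', hG', hequiv⟩ := h
  ⟨conj G', hU G' hG', equivA_conj hU hequiv⟩

end Conj

section Universe

variable {U : Set Aug}

/-- Dicotic closure of a set `U` of games: any two nonempty finite families in `U` are the families
of Left and Right options of a game in `U`. Stated for families so as to be the field `dicotic` of
`IsUniverse`. -/
def DicoticallyClosed (U : Set Aug) : Prop :=
  ∀ (m n : ℕ) (L : Fin m → Aug) (R : Fin n → Aug), 0 < m → 0 < n →
    (∀ i, L i ∈ U) → (∀ j, R j ∈ U) → mk m n L R false false ∈ U

lemma DicoticallyClosed.exists_options_eq (hU : DicoticallyClosed U) {S T : Set Aug}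
    (hS : S.Finite) (hT : T.Finite) (hS₀ : S.Nonempty) (hT₀ : T.Nonempty) (hSU : S ⊆ U)
    (hTU : T ⊆ U) : ∃ G ∈ U, G.leftOptions = S ∧ G.rightOptions = T := by
  obtain ⟨m, L, -, rfl⟩ := hS.fin_param
  obtain ⟨n, R, -, rfl⟩ := hT.fin_param
  have hm : 0 < m := Fin.pos_iff_nonempty.2 (Set.range_nonempty_iff_nonempty.1 hS₀)
  have hn : 0 < n := Fin.pos_iff_nonempty.2 (Set.range_nonempty_iff_nonempty.1 hT₀)
  exact ⟨mk m n L R false false,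
    hU m n L R hm hn (Set.range_subset_iff.1 hSU) (Set.range_subset_iff.1 hTU), rfl, rfl⟩

/-- A disintegrating game: the condition on the Right option `Q = G^R` that makes `G` a
disintegrator. -/
def Disintegrating (Q : Aug) : Prop :=
  Q.leftOptions.Nonempty ∧ ∀ K ∈ Q.leftOptions, ¬ oL K ∨ Disintegrator K

lemma disintegrator_iff (G : Aug) : Disintegrator G ↔ ∃ Q ∈ G.rightOptions, Disintegrating Q := by
  simp only [Disintegrating, ← not_leftEnd_iff]
  rw [Disintegrator, rightOptions, Set.exists_range_iff]
  simp only [leftOptions, Set.forall_mem_range]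
  rfl

theorem oR_oneConj_add {X : Aug} (hX : IsGame X) (hL : oL X) (hd : ¬ Disintegrator X) :
    oR (oneConj + X) := by
  induction X using rightLeft_induction with
  | step X ih =>
    refine (oR_add_iff oneConj X).2 ⟨rfl, hX.tombR_eq, by simp [rightEnd_iff], ?_, fun Q hQ => ?_⟩
    · simpa using hL
    · by_cases hQL : LeftEnd Q
      · exact LeftEnd.oL (leftEnd_add_iff.2 ⟨rfl, hQL⟩)
      · have hQd : ¬ Disintegrating Q := fun h => hd ((disintegrator_iff X).2 ⟨Q, hQ, h⟩)
        simp only [Disintegrating, ← not_leftEnd_iff, hQL, not_false_eq_true, true_and, not_forall,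
          not_or, not_not] at hQd
        obtain ⟨K, hK, hKL, hKd⟩ := hQd
        have hKgame := (hX.of_mem_rightOptions hQ).of_mem_leftOptions hK
        exact oL_add_of_oR_right hK (ih Q hQ K hK hKgame hKL hKd)

lemma leftOptions_one_add_oneConj : (one + oneConj).leftOptions = {oneConj} := by
  simp [leftOptions_add]

lemma rightOptions_one_add_oneConj : (one + oneConj).rightOptions = {one} := by
  simp [rightOptions_add]

lemma oneConj_add_one : oneConj + one = one + oneConj := by
  have hL : oneConj + 0 = 0 + oneConj := by rw [add_zero, zero_add]
  have hR : 0 + one = one + 0 := by rw [add_zero, zero_add]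
  exact mk_eq_mk rfl rfl (funext <| Fin.forall_fin_one.2 hL) (funext <| Fin.forall_fin_one.2 hR)
    rfl rfl

lemma leftStrong_one_add_oneConj (hgame : ∀ X ∈ U, IsGame X)
    (hd : ∀ X ∈ U, LeftEnd X → ¬ Disintegrator X) : LeftStrong U (one + oneConj) := by
  intro X hX hXend
  refine oL_add_of_oR_left (K := oneConj) (by simp [leftOptions_one_add_oneConj]) ?_
  exact oR_oneConj_add (hgame X hX) hXend.oL (hd X hX hXend)

lemma geA_one_add_oneConj_zero (hU : Hereditary U) (h : LeftStrong U (one + oneConj)) :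
    geA U (one + oneConj) 0 := by
  refine geA_of_maintenance hU rfl rfl (fun _ => h) (fun hend => ?_) (by simp) ?_
  · simp [rightEnd_iff, rightOptions_one_add_oneConj] at hend
  · simp [rightOptions_one_add_oneConj, geA_refl]

theorem equivA_one_add_oneConj_zero (hgame : ∀ X ∈ U, IsGame X) (hU : Hereditary U)
    (hconj : ∀ X ∈ U, conj X ∈ U) (hd : ∀ X ∈ U, LeftEnd X → ¬ Disintegrator X) :
    equivA U (one + oneConj) 0 := by
  have hge : geA U (one + oneConj) 0 :=
    geA_one_add_oneConj_zero hU (leftStrong_one_add_oneConj hgame hd)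
  have hle := geA_conj hconj hge
  rw [conj_zero, conj_add, conj_oneConj, conj_one, oneConj_add_one] at hle
  exact equivA_iff.2 ⟨hge, hle⟩

lemma exists_geA_subset_leftOptions (hgame : ∀ X ∈ U, IsGame X) (hU : Hereditary U)
    (hdic : DicoticallyClosed U) {Q : Aug} (hQ : Q ∈ U) (hQL : Q.leftOptions.Nonempty)
    {S : Set Aug} (hS : S.Finite) (hSU : S ⊆ U) :
    ∃ Z ∈ U, geA Set.univ Z Q ∧ S ⊆ Z.leftOptions := by
  -- `V = {Q | Q}` and `Z = {Q^L, S | V}`: Left reverses Right's only move in `Z` to `Q`.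
  obtain ⟨V, hV, hVL, -⟩ := hdic.exists_options_eq (Set.finite_singleton Q)
    (Set.finite_singleton Q) (Set.singleton_nonempty Q) (Set.singleton_nonempty Q)
    (Set.singleton_subset_iff.2 hQ) (Set.singleton_subset_iff.2 hQ)
  obtain ⟨Z, hZ, hZL, hZR⟩ := hdic.exists_options_eq (Q.finite_leftOptions.union hS)
    (Set.finite_singleton V) hQL.inl (Set.singleton_nonempty V)
    (Set.union_subset (fun K hK => hU.mem_of_mem_leftOptions hQ hK) hSU)
    (Set.singleton_subset_iff.2 hV)
  refine ⟨Z, hZ, ?_, hZL ▸ Set.subset_union_right⟩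
  refine geA_of_subset_leftOptions hereditary_univ (hgame Z hZ).tombR_eq (hgame Q hQ).tombL_eq
    (hZR ▸ Set.singleton_nonempty V) hQL (hZL ▸ Set.subset_union_left) ?_
  simp [hZR, hVL]

theorem exists_not_oL_geA_forall (hgame : ∀ X ∈ U, IsGame X) (hU : Hereditary U)
    (hdic : DicoticallyClosed U) {Q : Aug} (hQ : Q ∈ U) (hQL : Q.leftOptions.Nonempty)
    {S : Set Aug} (hS : S.Finite) (hS₀ : S.Nonempty) (hSU : S ⊆ U) (hSL : ∀ N ∈ S, ¬ oL N) :
    ∃ Y ∈ U, ¬ oL Y ∧ (∀ N ∈ S, geA Set.univ Y N) ∧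
      ∃ Z, Y.rightOptions = {Z} ∧ geA Set.univ Z Q := by
  obtain ⟨Z, hZ, hZQ, hSZ⟩ := exists_geA_subset_leftOptions hgame hU hdic hQ hQL hS hSU
  have hne : ∀ N ∈ S, N.leftOptions.Nonempty := fun N hN =>
    nonempty_leftOptions_of_not_oL (hSL N hN)
  have hYL₀ : (⋃ N ∈ S, N.leftOptions).Nonempty := by
    obtain ⟨N, hN⟩ := hS₀
    exact (hne N hN).mono (Set.subset_biUnion_of_mem (u := leftOptions) hN)
  -- `Y = {N^L for N ∈ S | Z}`: Left reverses Right's only move in `Y` to any `N ∈ S` she wants.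
  obtain ⟨Y, hY, hYL, hYR⟩ := hdic.exists_options_eq
    (hS.biUnion fun N _ => N.finite_leftOptions) (Set.finite_singleton Z) hYL₀
    (Set.singleton_nonempty Z)
    (Set.iUnion₂_subset fun N hN K hK => hU.mem_of_mem_leftOptions (hSU hN) hK)
    (Set.singleton_subset_iff.2 hZ)
  refine ⟨Y, hY, fun h => ?_, fun N hN => ?_, Z, hYR, hZQ⟩
  · rcases (oL_iff Y).1 h with h | h | ⟨K, hK, hKR⟩
    · simp [(hgame Y hY).tombL_eq] at h
    · exact not_leftEnd_iff.2 (hYL ▸ hYL₀) h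
    · obtain ⟨N, hN, hKN⟩ := Set.mem_iUnion₂.1 (hYL ▸ hK)
      exact hSL N hN ((oL_iff N).2 (Or.inr (Or.inr ⟨K, hKN, hKR⟩)))
  · refine geA_of_subset_leftOptions hereditary_univ (hgame Y hY).tombR_eq
      (hgame N (hSU hN)).tombL_eq (hYR ▸ Set.singleton_nonempty Z) (hne N hN)
      (hYL ▸ Set.subset_biUnion_of_mem (u := leftOptions) hN) ?_
    simpa [hYR] using hSZ hN

lemma mem_leftOptions_add_one (G : Aug) : G ∈ (G + one).leftOptions := by
  simp [leftOptions_add]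

lemma geA_add_one_of_rightOptions_eq {Y Z Q : Aug} (hY : Y.tombR = false)
    (hQ : Q.tombL = false) (hQL : Q.leftOptions.Nonempty) (hYR : Y.rightOptions = {Z})
    (hZQ : geA Set.univ Z Q)
    (hL : ∀ K ∈ Q.leftOptions,
      geA Set.univ Y K ∨ ∃ K' ∈ K.rightOptions, geA Set.univ (Y + one) K') :
    geA Set.univ (Y + one) Q := by
  have hYR' : (Y + one).rightOptions = {Z + one} := by simp [rightOptions_add, hYR]
  refine geA_of_maintenance hereditary_univ (by rw [tombR_add, hY, tombR_one, Bool.false_or]) hQ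
    (fun h => absurd h (not_leftEnd_iff.2 hQL))
    (fun h => absurd h (not_rightEnd_iff.2 (hYR' ▸ Set.singleton_nonempty _)))
    (fun K hK => (hL K hK).imp_left fun h => ⟨Y, mem_leftOptions_add_one Y, h⟩) ?_
  rw [hYR']
  rintro _ rfl
  exact Or.inr ⟨Z, mem_leftOptions_add_one Z, hZQ⟩

theorem Disintegrator.exists_geA_add_one (hgame : ∀ X ∈ U, IsGame X) (hU : Hereditary U)
    (hdic : DicoticallyClosed U) {X : Aug} (hX : X ∈ U) (hd : Disintegrator X) :
    ∃ Y ∈ U, ¬ oL Y ∧ ∃ Q ∈ X.rightOptions, geA Set.univ (Y + one) Q ∧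
      ∃ Z, Y.rightOptions = {Z} ∧ geA Set.univ Z Q := by
  induction X using rightLeft_induction with
  | step X ih =>
    obtain ⟨Q, hQX, hQL, hQd⟩ := (disintegrator_iff X).1 hd
    have hQ : Q ∈ U := hU.mem_of_mem_rightOptions hX hQX
    have hLose : ∀ K ∈ Q.leftOptions, ∃ N ∈ U, ¬ oL N ∧
        (geA Set.univ N K ∨ ∃ K' ∈ K.rightOptions, geA Set.univ (N + one) K') := by
      intro K hK
      have hKU : K ∈ U := hU.mem_of_mem_leftOptions hQ hK
      rcases hQd K hK with hKL | hKd
      · exact ⟨K, hKU, hKL, Or.inl (geA_refl _ K)⟩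
      · obtain ⟨N, hN, hNL, K', hK', hge, -⟩ := ih Q hQX K hK hKU hKd
        exact ⟨N, hN, hNL, Or.inr ⟨K', hK', hge⟩⟩
    choose! N hNU hNL hNK using hLose
    obtain ⟨Y, hY, hYL, hYN, Z, hYR, hZQ⟩ := exists_not_oL_geA_forall hgame hU hdic hQ hQL
      (Q.finite_leftOptions.image N) (hQL.image N) (Set.image_subset_iff.2 hNU)
      (Set.forall_mem_image.2 hNL)
    refine ⟨Y, hY, hYL, Q, hQX, ?_, Z, hYR, hZQ⟩
    refine geA_add_one_of_rightOptions_eq (hgame Y hY).tombR_eq (hgame Q hQ).tombL_eq hQL hYR hZQ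
      fun K hK => ?_
    have hYK : geA Set.univ Y (N K) := hYN _ (Set.mem_image_of_mem N hK)
    exact (hNK K hK).imp (geA_trans hYK) fun ⟨K', hK', hge⟩ =>
      ⟨K', hK', geA_trans (geA_univ_add_right hYK one) hge⟩

theorem Disintegrator.exists_add_one_geA_add_one (hgame : ∀ X ∈ U, IsGame X) (hU : Hereditary U)
    (hdic : DicoticallyClosed U) {X : Aug} (hX : X ∈ U) (hXend : LeftEnd X)
    (hd : Disintegrator X) : ∃ Y ∈ U, ¬ oL Y ∧ geA Set.univ (Y + one) (X + one) := by
  obtain ⟨Y, hY, hYL, Q, hQX, hYQ, Z, hYR, hZQ⟩ := hd.exists_geA_add_one hgame hU hdic hX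
  refine ⟨Y, hY, hYL, geA_of_maintenance hereditary_univ ?_ ?_ ?_ ?_ ?_ ?_⟩
  · rw [tombR_add, (hgame Y hY).tombR_eq, tombR_one, Bool.false_or]
  · rw [tombL_add, (hgame X hX).tombL_eq, tombL_one, Bool.false_or]
  · exact fun h => absurd h (not_leftEnd_iff.2 ⟨X, mem_leftOptions_add_one X⟩)
  · simp [rightEnd_iff, rightOptions_add, hYR]
  · simp only [leftOptions_add, leftEnd_iff.1 hXend, leftOptions_one, Set.image_empty,
      Set.empty_union, Set.image_singleton, add_zero, Set.mem_singleton_iff, forall_eq]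
    exact Or.inr ⟨Q, hQX, hYQ⟩
  · simp only [rightOptions_add, hYR, rightOptions_one, Set.image_singleton, Set.image_empty,
      Set.union_empty, Set.mem_singleton_iff, forall_eq, Set.exists_mem_image]
    exact Or.inl ⟨Q, hQX, geA_univ_add_right hZQ one⟩

theorem not_disintegrator_of_equivA_one_add_zero (hgame : ∀ X ∈ U, IsGame X) (hU : Hereditary U)
    (hdic : DicoticallyClosed U) {H X : Aug} (hH : equivA U (one + H) 0) (hX : X ∈ U)
    (hXend : LeftEnd X) : ¬ Disintegrator X := by
  intro hd
  obtain ⟨Y, hY, hYL, hge⟩ := hd.exists_add_one_geA_add_one hgame hU hdic hX hXend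
  have oL_iff_add : ∀ W ∈ U, oL W ↔ oL (W + one + H) := fun W hW => by
    rw [add_assoc, (outEq_add_comm W (one + H)).1, (hH W hW).1, zero_add]
  exact hYL ((oL_iff_add Y hY).2 ((hge H trivial).1 ((oL_iff_add X hX).1 hXend.oL)))

end Universe

end Aug

theorem stmt13_general {U : Set Aug} (hgame : ∀ X ∈ U, Aug.IsGame X) (hU : Aug.Hereditary U)
    (hconj : ∀ X ∈ U, Aug.conj X ∈ U) (hdic : Aug.DicoticallyClosed U)
    (h1 : Aug.one ∈ Aug.hatU U) :
    Aug.InvertibleHat U Aug.one ↔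
      ∀ X ∈ U, Aug.LeftEnd X → ¬ Aug.Disintegrator X := by
  constructor
  · rintro ⟨H, -, hH⟩ X hX hXend
    exact Aug.not_disintegrator_of_equivA_one_add_zero hgame hU hdic hH hX hXend
  · intro hd
    exact ⟨Aug.oneConj, Aug.conj_one ▸ Aug.conj_mem_hatU hconj h1,
      Aug.equivA_one_add_oneConj_zero hgame hU hconj hd⟩

/-- if `1 ∈ Û`, then `1` is `U`-invertible iff `U` contains no
Left end that is a disintegrator. -/
theorem stmt13 (U : Set Aug) (hU : Aug.IsUniverse U) (h1 : Aug.one ∈ Aug.hatU U) :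
    Aug.InvertibleHat U Aug.one ↔
      ∀ X ∈ U, Aug.LeftEnd X → ¬ Aug.Disintegrator X :=
  stmt13_general hU.games (fun G hG => ⟨hU.moveL_mem G hG, hU.moveR_mem G hG⟩) hU.conj_mem
    hU.dicotic h1
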